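/- Let Ω ⊂ ℝⁿ be a bounded Lipschitz domain, let f ∈ C²([0,∞)) be strictly convex with f(0) = f'(0) = 0, satisfying the linear growth condition νt − L ≤ f(t) ≤ L(t+1) and the bound f''(t) ≤ L(1+t)⁻¹ for all t ≥ 0, and let T₀ ∈ W^{2,∞}(Ω;ℝ^{N×n}) satisfy ‖T₀‖_{L^∞(Ω;ℝ^{N×n})} < f^∞(1). Let u_k ∈ W^{1,2}(Ω;ℝ^N) be the minimisers of 𝔉_k with (u_k)_Ω = 0. Then there exist E ∈ L¹(Ω;ℝ^{N×n}) and a subsequence of (u_k) (not relabelled) such that ∇u_k converges to E in the biting sense weakly in L¹(Ω;ℝ^{N×n}) and ∇u_k → E ℒⁿ-almost everywhere in Ω as k → ∞. -/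

import Mathlib

open MeasureTheory Filter Topology Set
open scoped ENNReal RealInnerProductSpace

noncomputable section

/-- Euclidean space `ℝⁿ`. -/
abbrev EVec (n : ℕ) := EuclideanSpace ℝ (Fin n)

/-- Frobenius inner product of two "matrices". -/
def mdot {ι κ : Type*} [Fintype ι] [Fintype κ] (A B : ι → κ → ℝ) : ℝ :=
  ∑ a, ∑ i, A a i * B a i

/-- Frobenius norm. -/
noncomputable def mnorm {ι κ : Type*} [Fintype ι] [Fintype κ] (A : ι → κ → ℝ) : ℝ :=
  Real.sqrt (mdot A A)

/-- Euclidean norm of a vector given as a tuple. -/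
noncomputable def vnorm {ι : Type*} [Fintype ι] (v : ι → ℝ) : ℝ :=
  Real.sqrt (∑ a, v a ^ 2)

/-- `Ω ⊆ ℝⁿ` is a (nonempty, open, connected) Lipschitz domain: every boundary point has
a neighbourhood on which `Ω` can be flattened to a half space by a bi-Lipschitz map. -/
def IsLipschitzDomain {n : ℕ} (Ω : Set (EVec n)) : Prop :=
  IsOpen Ω ∧ Ω.Nonempty ∧ IsConnected Ω ∧
  ∀ x ∈ frontier Ω, ∃ (U : Set (EVec n)) (h hinv : EVec n → EVec n) (K : NNReal)
      (e : EVec n),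
    ‖e‖ = 1 ∧ IsOpen U ∧ x ∈ U ∧ LipschitzOnWith K h U ∧
    LipschitzOnWith K hinv (h '' U) ∧ (∀ y ∈ U, hinv (h y) = y) ∧
    h '' (U ∩ Ω) = (h '' U) ∩ {y : EVec n | 0 < ⟪e, y⟫}

/-- `Du` is the weak (distributional) gradient of `u` on `Ω`, and both are integrable;
i.e. `u ∈ W^{1,1}(Ω; ℝ^ι)` with weak gradient `Du`. -/
def HasWeakDerivOn {n : ℕ} {ι : Type*} [Fintype ι] (Ω : Set (EVec n))
    (u : EVec n → ι → ℝ) (Du : EVec n → ι → Fin n → ℝ) : Prop :=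
  IntegrableOn u Ω volume ∧ IntegrableOn Du Ω volume ∧
  ∀ φ : EVec n → ℝ, ContDiff ℝ 1 φ → HasCompactSupport φ → tsupport φ ⊆ Ω →
    ∀ (a : ι) (i : Fin n),
      ∫ x in Ω, u x a * fderiv ℝ φ x (EuclideanSpace.single i 1) =
        - ∫ x in Ω, Du x a i * φ x

/-- `u ∈ W^{1,2}(Ω;ℝ^ι)` with weak gradient `Du`. -/
def MemW12 {n : ℕ} {ι : Type*} [Fintype ι] (Ω : Set (EVec n))
    (u : EVec n → ι → ℝ) (Du : EVec n → ι → Fin n → ℝ) : Prop :=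
  HasWeakDerivOn Ω u Du ∧ IntegrableOn (fun x => vnorm (u x) ^ 2) Ω volume ∧
    IntegrableOn (fun x => mnorm (Du x) ^ 2) Ω volume

/-- vanishing mean value `(u)_Ω = 0`. -/
def ZeroMean {n : ℕ} {ι : Type*} [Fintype ι] (Ω : Set (EVec n))
    (u : EVec n → ι → ℝ) : Prop :=
  ∀ a : ι, ∫ x in Ω, u x a = 0

/-- The `L^∞(Ω)` norm of a matrix field (w.r.t. the pointwise Frobenius norm). -/
noncomputable def linfNormOn {n N : ℕ} (Ω : Set (EVec n))
    (T : EVec n → Fin N → Fin n → ℝ) : ℝ≥0∞ :=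
  essSup (fun x => ENNReal.ofReal (mnorm (T x))) (volume.restrict Ω)

/-- `T ∈ W^{1,∞}(Ω)`: bounded and Lipschitz on `Ω`. -/
def MemW1inf {n N : ℕ} (Ω : Set (EVec n)) (T : EVec n → Fin N → Fin n → ℝ) : Prop :=
  ∃ C : NNReal, (∀ x ∈ Ω, ‖T x‖ ≤ C) ∧ LipschitzOnWith C T Ω

/-- `T ∈ W^{2,∞}(Ω)`: `T` is bounded with bounded Lipschitz derivative on `Ω`. -/
def MemW2inf {n N : ℕ} (Ω : Set (EVec n)) (T : EVec n → Fin N → Fin n → ℝ) : Prop :=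
  ∃ (C : NNReal) (DT : EVec n → EVec n →L[ℝ] (Fin N → Fin n → ℝ)),
    (∀ x ∈ Ω, ‖T x‖ ≤ C) ∧ (∀ x ∈ Ω, HasFDerivWithinAt T (DT x) Ω x) ∧
    (∀ x ∈ Ω, ‖DT x‖ ≤ C) ∧ LipschitzOnWith C DT Ω

/-- The nonlinear map `A(z) = f'(|z|) z / |z|` (equal to `0` at `z = 0`). -/
noncomputable def Amap {N n : ℕ} (f' : ℝ → ℝ) (z : Fin N → Fin n → ℝ) :
    Fin N → Fin n → ℝ :=
  fun a i => (f' (mnorm z) / mnorm z) * z a i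

/-- `u` is a weak solution of the Neumann problem for the integrand `f(|·|)` and datum `T₀`. -/
def IsWeakSolution {n N : ℕ} (Ω : Set (EVec n)) (f' : ℝ → ℝ)
    (T₀ : EVec n → Fin N → Fin n → ℝ)
    (u : EVec n → Fin N → ℝ) (Du : EVec n → Fin N → Fin n → ℝ) : Prop :=
  HasWeakDerivOn Ω u Du ∧
  ∀ φ Dφ, HasWeakDerivOn Ω φ Dφ →
    ∫ x in Ω, mdot (Amap f' (Du x)) (Dφ x) = ∫ x in Ω, mdot (T₀ x) (Dφ x)

/-- The functional `𝔉[w] = ∫_Ω (f(|∇w|) − T₀ · ∇w) dx` (as a function of the gradient). -/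
noncomputable def FF {n N : ℕ} (Ω : Set (EVec n)) (f : ℝ → ℝ)
    (T₀ : EVec n → Fin N → Fin n → ℝ) (Du : EVec n → Fin N → Fin n → ℝ) : ℝ :=
  ∫ x in Ω, (f (mnorm (Du x)) - mdot (T₀ x) (Du x))

/-- The regularised functional `𝔉_k[w] = 𝔉[w] + (2k)⁻¹ ∫_Ω |∇w|² dx`. -/
noncomputable def FFk {n N : ℕ} (Ω : Set (EVec n)) (f : ℝ → ℝ)
    (T₀ : EVec n → Fin N → Fin n → ℝ) (k : ℕ)
    (Du : EVec n → Fin N → Fin n → ℝ) : ℝ :=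
  FF Ω f T₀ Du + (2 * (k : ℝ))⁻¹ * ∫ x in Ω, mnorm (Du x) ^ 2

end

/-- Biting convergence: weak `L¹`-convergence on an exhausting sequence of subsets of
`Ω` whose complements have vanishing measure (Chacon). -/
def BitingConvTo {n N : ℕ} (Ω : Set (EVec n))
    (Ek : ℕ → EVec n → Fin N → Fin n → ℝ) (E : EVec n → Fin N → Fin n → ℝ) : Prop :=
  ∃ Ωj : ℕ → Set (EVec n),
    (∀ j, MeasurableSet (Ωj j) ∧ Ωj j ⊆ Ω) ∧ Monotone Ωj ∧
    Filter.Tendsto (fun j => volume (Ω \ Ωj j)) Filter.atTop (nhds 0) ∧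
    ∀ j, ∀ g : EVec n → Fin N → Fin n → ℝ,
      AEStronglyMeasurable g (volume.restrict (Ωj j)) →
      (∃ C : ℝ, ∀ x, mnorm (g x) ≤ C) →
      Filter.Tendsto (fun k => ∫ x in Ωj j, mdot (Ek k x) (g x)) Filter.atTop
        (nhds (∫ x in Ωj j, mdot (E x) (g x)))

/-!
The minimal values `m k` of `𝔉_k` decrease in `k` and are bounded below, hence form a Cauchy
sequence. Testing the minimality of `∇u_l` with the midpoint of `∇u_k` and `∇u_l`, `k ≤ l`, shows
that the integral of the convexity defect of `z ↦ f(|z|)` at that midpoint is at most `m k - m l`.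
Since `‖T₀‖_∞ < f^∞(1)`, the functional is coercive, so the gradients are bounded in `L¹`. On
bounded sets strict convexity bounds the defect below in terms of `|∇u_k - ∇u_l|`, so the gradients
are Cauchy in measure and a subsequence converges almost everywhere. The biting sets are the sets
where that subsequence is bounded by `j`; there dominated convergence applies.
-/

section MidpointGap

variable {V : Type*} [AddCommGroup V] [Module ℝ V]

/-- The convexity defect of `g` at the midpoint of `z` and `w`: nonnegative for convex `g`,
positive off the diagonal for strictly convex `g`. -/
noncomputable def midpointGap (g : V → ℝ) (z w : V) : ℝ :=
  (g z + g w) / 2 - g (midpoint ℝ z w)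

lemma midpointGap_comm (g : V → ℝ) (z w : V) : midpointGap g z w = midpointGap g w z := by
  rw [midpointGap, midpointGap, add_comm, midpoint_comm]

lemma midpointGap_sub_linear (g : V → ℝ) (ℓ : V →ₗ[ℝ] ℝ) (z w : V) :
    midpointGap (fun y => g y - ℓ y) z w = midpointGap g z w := by
  simp only [midpointGap, midpoint_eq_smul_add, map_smul, map_add, smul_eq_mul, invOf_eq_inv]
  ring

lemma midpoint_eq_half_smul_add_half_smul (z w : V) :
    midpoint ℝ z w = (1 / 2 : ℝ) • z + (1 / 2 : ℝ) • w := by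
  rw [midpoint_eq_smul_add, invOf_eq_inv, smul_add, one_div]

lemma midpointGap_nonneg {s : Set V} {g : V → ℝ} (hg : ConvexOn ℝ s g) {z w : V}
    (hz : z ∈ s) (hw : w ∈ s) : 0 ≤ midpointGap g z w := by
  have hmid := hg.2 hz hw one_half_pos.le one_half_pos.le (add_halves 1)
  rw [← midpoint_eq_half_smul_add_half_smul, smul_eq_mul, smul_eq_mul] at hmid
  rw [midpointGap]
  linarith

lemma midpointGap_pos {s : Set V} {g : V → ℝ} (hg : StrictConvexOn ℝ s g) {z w : V}
    (hz : z ∈ s) (hw : w ∈ s) (hzw : z ≠ w) : 0 < midpointGap g z w := by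
  have hmid := hg.2 hz hw hzw one_half_pos one_half_pos (add_halves 1)
  rw [← midpoint_eq_half_smul_add_half_smul, smul_eq_mul, smul_eq_mul] at hmid
  rw [midpointGap]
  linarith

end MidpointGap

section UniformGap

variable {V : Type*} [NormedAddCommGroup V] [NormedSpace ℝ V]

lemma continuous_midpointGap {g : V → ℝ} (hg : Continuous g) :
    Continuous fun p : V × V => midpointGap g p.1 p.2 := by
  simp only [midpointGap, midpoint_eq_smul_add]
  fun_prop

lemma exists_pos_le_midpointGap {g : V → ℝ} (hg : StrictConvexOn ℝ univ g) (hcont : Continuous g)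
    {K : Set V} (hK : IsCompact K) {ε : ℝ} (hε : 0 < ε) :
    ∃ δ > 0, ∀ z ∈ K, ∀ w ∈ K, ε ≤ dist z w → δ ≤ midpointGap g z w := by
  have hcompact : IsCompact ((K ×ˢ K) ∩ {p : V × V | ε ≤ dist p.1 p.2}) :=
    (hK.prod hK).inter_right (isClosed_le continuous_const continuous_dist)
  have hpos : ∀ p ∈ (K ×ˢ K) ∩ {p : V × V | ε ≤ dist p.1 p.2}, 0 < midpointGap g p.1 p.2 :=
    fun p hp => midpointGap_pos hg (mem_univ _) (mem_univ _) (dist_pos.1 (hε.trans_le hp.2))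
  obtain ⟨δ, hδ, hle⟩ :=
    hcompact.exists_forall_le' (continuous_midpointGap hcont).continuousOn hpos
  exact ⟨δ, hδ, fun z hz w hw hzw => hle (z, w) ⟨⟨hz, hw⟩, hzw⟩⟩

end UniformGap

section RegularizedMinimizers

variable {V : Type*} {𝒲 : Set V} {F Q : V → ℝ} {ε : ℕ → ℝ} {v : ℕ → V}

lemma antitone_regularized_minimum (hε : Antitone ε) (hQ : ∀ w ∈ 𝒲, 0 ≤ Q w)
    (hv : ∀ k, v k ∈ 𝒲) (hmin : ∀ k, IsMinOn (fun w => F w + ε k * Q w) 𝒲 (v k)) :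
    Antitone fun k => F (v k) + ε k * Q (v k) := by
  intro k l hkl
  calc F (v l) + ε l * Q (v l) ≤ F (v k) + ε l * Q (v k) := hmin l (hv k)
    _ ≤ F (v k) + ε k * Q (v k) := by
      gcongr
      · exact hQ _ (hv k)
      · exact hε hkl

lemma exists_forall_le_of_isMinOn_regularized {p : V → ℝ} {c C : ℝ} (hc : 0 < c)
    (hcoercive : ∀ w ∈ 𝒲, c * p w ≤ F w + C) (hε : Antitone ε) (hε0 : ∀ k, 0 ≤ ε k)
    (hQ : ∀ w ∈ 𝒲, 0 ≤ Q w) (hv : ∀ k, v k ∈ 𝒲)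
    (hmin : ∀ k, IsMinOn (fun w => F w + ε k * Q w) 𝒲 (v k)) : ∃ B, ∀ k, p (v k) ≤ B := by
  refine ⟨(F (v 0) + ε 0 * Q (v 0) + C) / c, fun k => (le_div_iff₀' hc).2 ?_⟩
  calc c * p (v k) ≤ F (v k) + C := hcoercive _ (hv k)
    _ ≤ F (v k) + ε k * Q (v k) + C := by linarith [mul_nonneg (hε0 k) (hQ _ (hv k))]
    _ ≤ F (v 0) + ε 0 * Q (v 0) + C := by
      linarith only [antitone_regularized_minimum hε hQ hv hmin k.zero_le]

variable [AddCommGroup V] [Module ℝ V]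

-- Test the `l`-th minimality against the midpoint of `v k` and `v l`.
lemma midpointGap_le_of_isMinOn_regularized (hε : Antitone ε) (hε0 : ∀ k, 0 ≤ ε k)
    (hQ : ∀ w ∈ 𝒲, 0 ≤ Q w) (hQconv : ConvexOn ℝ 𝒲 Q) (hv : ∀ k, v k ∈ 𝒲)
    (hmin : ∀ k, IsMinOn (fun w => F w + ε k * Q w) 𝒲 (v k)) {k l : ℕ} (hkl : k ≤ l) :
    midpointGap F (v k) (v l) ≤ (F (v k) + ε k * Q (v k)) - (F (v l) + ε l * Q (v l)) := by
  have hmid : midpoint ℝ (v k) (v l) ∈ 𝒲 := hQconv.1.midpoint_mem (hv k) (hv l)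
  have hmin_mid : F (v l) + ε l * Q (v l) ≤
      F (midpoint ℝ (v k) (v l)) + ε l * Q (midpoint ℝ (v k) (v l)) := hmin l hmid
  have hQgap : 0 ≤ ε l * midpointGap Q (v k) (v l) :=
    mul_nonneg (hε0 l) (midpointGap_nonneg hQconv (hv k) (hv l))
  have hreg : ε l * Q (v k) ≤ ε k * Q (v k) :=
    mul_le_mul_of_nonneg_right (hε hkl) (hQ _ (hv k))
  have hanti : F (v l) + ε l * Q (v l) ≤ F (v k) + ε k * Q (v k) :=
    antitone_regularized_minimum hε hQ hv hmin hkl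
  simp only [midpointGap] at hQgap ⊢
  linarith

lemma tendsto_midpointGap_of_isMinOn_regularized (hF : ConvexOn ℝ 𝒲 F) (hbdd : BddBelow (F '' 𝒲))
    (hQ : ∀ w ∈ 𝒲, 0 ≤ Q w) (hQconv : ConvexOn ℝ 𝒲 Q) (hε : Antitone ε) (hε0 : ∀ k, 0 ≤ ε k)
    (hv : ∀ k, v k ∈ 𝒲) (hmin : ∀ k, IsMinOn (fun w => F w + ε k * Q w) 𝒲 (v k)) :
    Tendsto (fun p : ℕ × ℕ => midpointGap F (v p.1) (v p.2)) atTop (𝓝 0) := by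
  set m : ℕ → ℝ := fun k => F (v k) + ε k * Q (v k)
  have hm_bdd : BddBelow (range m) := by
    obtain ⟨b, hb⟩ := hbdd
    refine ⟨b, ?_⟩
    rintro _ ⟨k, rfl⟩
    exact (hb ⟨v k, hv k, rfl⟩).trans (le_add_of_nonneg_right (mul_nonneg (hε0 k) (hQ _ (hv k))))
  have hm_cauchy : CauchySeq m :=
    (tendsto_atTop_ciInf (antitone_regularized_minimum hε hQ hv hmin) hm_bdd).cauchySeq
  have hle : ∀ k l, midpointGap F (v k) (v l) ≤ dist (m k) (m l) := by
    intro k l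
    rcases le_total k l with hkl | hlk
    · exact (midpointGap_le_of_isMinOn_regularized hε hε0 hQ hQconv hv hmin hkl).trans
        (le_abs_self _)
    · rw [midpointGap_comm, dist_comm]
      exact (midpointGap_le_of_isMinOn_regularized hε hε0 hQ hQconv hv hmin hlk).trans
        (le_abs_self _)
  exact squeeze_zero (fun p => midpointGap_nonneg hF (hv p.1) (hv p.2)) (fun p => hle p.1 p.2)
    (cauchySeq_iff_tendsto_dist_atTop_0.1 hm_cauchy)

end RegularizedMinimizers

section IntegralFunctionals

variable {X V : Type*} [MeasurableSpace X] {μ : Measure X} [AddCommGroup V] [Module ℝ V]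

lemma convexOn_integral_comp {h : X → V → ℝ} (hh : ∀ x, ConvexOn ℝ univ (h x)) {𝒲 : Set (X → V)}
    (h𝒲 : Convex ℝ 𝒲) (hint : ∀ v ∈ 𝒲, Integrable (fun x => h x (v x)) μ) :
    ConvexOn ℝ 𝒲 fun v => ∫ x, h x (v x) ∂μ := by
  refine ⟨h𝒲, fun v hv w hw a b ha hb hab => ?_⟩
  simp only [smul_eq_mul, ← integral_const_mul]
  rw [← integral_add ((hint v hv).const_mul a) ((hint w hw).const_mul b)]
  exact integral_mono (hint _ (h𝒲 hv hw ha hb hab))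
    (((hint v hv).const_mul a).add ((hint w hw).const_mul b))
    fun x => (hh x).2 (mem_univ _) (mem_univ _) ha hb hab

lemma midpointGap_integral_comp {h : X → V → ℝ} {v w : X → V}
    (hv : Integrable (fun x => h x (v x)) μ) (hw : Integrable (fun x => h x (w x)) μ)
    (hmid : Integrable (fun x => h x (midpoint ℝ (v x) (w x))) μ) :
    midpointGap (fun u : X → V => ∫ x, h x (u x) ∂μ) v w =
      ∫ x, midpointGap (h x) (v x) (w x) ∂μ := by
  have hsum : Integrable (fun x => (h x (v x) + h x (w x)) / 2) μ := (hv.add hw).div_const 2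
  simp only [midpointGap, pi_midpoint_apply]
  rw [integral_sub hsum hmid, integral_div, integral_add hv hw]

end IntegralFunctionals

lemma integrable_midpoint {X V : Type*} [MeasurableSpace X] {μ : Measure X}
    [NormedAddCommGroup V] [NormedSpace ℝ V] {v w : X → V} (hv : Integrable v μ)
    (hw : Integrable w μ) : Integrable (fun x => midpoint ℝ (v x) (w x)) μ := by
  simp only [midpoint_eq_smul_add]
  exact (hv.add hw).smul (⅟2 : ℝ)

section CauchyInMeasure

variable {X V : Type*} [MeasurableSpace X] {μ : Measure X}

/-- A sequence of maps into a metric space is Cauchy in measure: for every `ε > 0`, the measure of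
the set where `v k` and `v l` are at least `ε` apart tends to `0` as `k, l → ∞`. -/
def CauchyInMeasure [PseudoMetricSpace V] (μ : Measure X) (v : ℕ → X → V) : Prop :=
  ∀ ε > 0, Tendsto (fun p : ℕ × ℕ => μ {x | ε ≤ dist (v p.1 x) (v p.2 x)}) atTop (𝓝 0)

lemma CauchyInMeasure.exists_subseq_ae_cauchySeq [PseudoMetricSpace V] {v : ℕ → X → V}
    (hv : CauchyInMeasure μ v) :
    ∃ φ : ℕ → ℕ, StrictMono φ ∧ ∀ᵐ x ∂μ, CauchySeq fun l => v (φ l) x := by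
  have hsmall : ∀ j : ℕ, ∃ K, ∀ k ≥ K, ∀ l ≥ k,
      μ {x | (1 / 2 : ℝ) ^ j ≤ dist (v k x) (v l x)} ≤ ENNReal.ofReal ((1 / 2) ^ j) := by
    intro j
    have hpos : (0 : ℝ) < (1 / 2) ^ j := by positivity
    obtain ⟨K, hK⟩ := eventually_atTop_prod_self'.1
      ((hv _ hpos).eventually_le_const (ENNReal.ofReal_pos.2 hpos))
    exact ⟨K, fun k hk l hl => hK k hk l (hk.trans hl)⟩
  obtain ⟨φ, hφ, hφ_small⟩ := extraction_forall_of_eventually' hsmall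
  have hsum : Summable fun j : ℕ => (1 / 2 : ℝ) ^ j := summable_geometric_two
  have hfin : ∑' j, μ {x | (1 / 2 : ℝ) ^ j ≤ dist (v (φ j) x) (v (φ (j + 1)) x)} ≠ ∞ :=
    ne_top_of_le_ne_top hsum.tsum_ofReal_ne_top
      (ENNReal.tsum_le_tsum fun j => hφ_small j _ (hφ.monotone j.le_succ))
  refine ⟨φ, hφ, ?_⟩
  -- Borel–Cantelli
  filter_upwards [ae_eventually_notMem hfin] with x hx
  refine cauchySeq_of_summable_dist (.of_norm_bounded_eventually_nat hsum ?_)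
  filter_upwards [hx] with j hj
  rw [Real.norm_of_nonneg dist_nonneg]
  exact (not_le.1 hj).le

lemma CauchyInMeasure.exists_subseq_ae_tendsto [PseudoMetricSpace V] [CompleteSpace V]
    [Nonempty V] {v : ℕ → X → V} (hv : CauchyInMeasure μ v) :
    ∃ φ : ℕ → ℕ, StrictMono φ ∧ ∃ E : X → V, ∀ᵐ x ∂μ,
      Tendsto (fun l => v (φ l) x) atTop (𝓝 (E x)) := by
  obtain ⟨φ, hφ, hcauchy⟩ := hv.exists_subseq_ae_cauchySeq
  exact ⟨φ, hφ, fun x => limUnder atTop fun l => v (φ l) x,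
    hcauchy.mono fun _ => CauchySeq.tendsto_limUnder⟩

lemma measureReal_ge_le_integral_div {g : X → ℝ} (hg : 0 ≤ᵐ[μ] g) (hint : Integrable g μ) {M : ℝ}
    (hM : 0 < M) : μ.real {x | M ≤ g x} ≤ (∫ x, g x ∂μ) / M := by
  rw [le_div_iff₀' hM]
  exact mul_meas_ge_le_integral_of_nonneg hg hint M

variable [NormedAddCommGroup V] [NormedSpace ℝ V] [ProperSpace V] [IsFiniteMeasure μ]

-- Where `v` and `w` are far apart, one of them is large or their gap is bounded below.
lemma exists_measureReal_dist_ge_le {g : V → ℝ} (hg : StrictConvexOn ℝ univ g)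
    (hcont : Continuous g) {M ε : ℝ} (hM : 0 < M) (hε : 0 < ε) :
    ∃ δ > 0, ∀ v w : X → V, Integrable v μ → Integrable w μ →
      Integrable (fun x => midpointGap g (v x) (w x)) μ →
      μ.real {x | ε ≤ dist (v x) (w x)} ≤
        (∫ x, ‖v x‖ ∂μ) / M + (∫ x, ‖w x‖ ∂μ) / M + (∫ x, midpointGap g (v x) (w x) ∂μ) / δ := by
  obtain ⟨δ, hδ, hgap⟩ := exists_pos_le_midpointGap hg hcont (isCompact_closedBall (0 : V) M) hε
  refine ⟨δ, hδ, fun v w hv hw hvw => ?_⟩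
  have hcover : {x | ε ≤ dist (v x) (w x)} ⊆
      ({x | M ≤ ‖v x‖} ∪ {x | M ≤ ‖w x‖}) ∪ {x | δ ≤ midpointGap g (v x) (w x)} := by
    intro x hx
    by_contra! hout
    simp only [mem_union, mem_ofPred_eq, not_or, not_le] at hout
    exact hout.2.not_ge (hgap _ (mem_closedBall_zero_iff.2 hout.1.1.le) _
      (mem_closedBall_zero_iff.2 hout.1.2.le) hx)
  calc μ.real {x | ε ≤ dist (v x) (w x)}
      ≤ μ.real {x | M ≤ ‖v x‖} + μ.real {x | M ≤ ‖w x‖}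
          + μ.real {x | δ ≤ midpointGap g (v x) (w x)} :=
        (measureReal_mono hcover).trans ((measureReal_union_le _ _).trans
          (add_le_add_left (measureReal_union_le _ _) _))
    _ ≤ _ := by
        gcongr
        · exact measureReal_ge_le_integral_div (ae_of_all _ fun x => norm_nonneg _) hv.norm hM
        · exact measureReal_ge_le_integral_div (ae_of_all _ fun x => norm_nonneg _) hw.norm hM
        · exact measureReal_ge_le_integral_div (ae_of_all _ fun x =>
            midpointGap_nonneg hg.convexOn (mem_univ _) (mem_univ _)) hvw hδ

lemma cauchyInMeasure_of_tendsto_integral_midpointGap {g : V → ℝ} (hg : StrictConvexOn ℝ univ g)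
    (hcont : Continuous g) {v : ℕ → X → V} {B : ℝ} (hv : ∀ k, Integrable (v k) μ)
    (hB : ∀ k, ∫ x, ‖v k x‖ ∂μ ≤ B)
    (hint : ∀ k l, Integrable (fun x => midpointGap g (v k x) (v l x)) μ)
    (hgap : Tendsto (fun p : ℕ × ℕ => ∫ x, midpointGap g (v p.1 x) (v p.2 x) ∂μ) atTop (𝓝 0)) :
    CauchyInMeasure μ v := by
  intro ε hε
  rw [← ENNReal.tendsto_toReal_zero_iff fun _ => measure_ne_top μ _]
  refine tendsto_order.2 ⟨fun a ha => .of_forall fun p => ha.trans_le ENNReal.toReal_nonneg,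
    fun η hη => ?_⟩
  obtain ⟨M, hM, hMB⟩ : ∃ M > 0, B / M ≤ η / 4 := by
    refine ⟨4 * (|B| + 1) / η, by positivity, ?_⟩
    rw [div_le_iff₀ (by positivity)]
    calc B ≤ |B| + 1 := by linarith [le_abs_self B]
      _ = η / 4 * (4 * (|B| + 1) / η) := by field_simp
  obtain ⟨δ, hδ, hle⟩ := exists_measureReal_dist_ge_le (μ := μ) hg hcont hM hε
  filter_upwards [hgap.eventually_lt_const (show 0 < η / 4 * δ by positivity)] with p hp
  have hlarge : ∀ k, (∫ x, ‖v k x‖ ∂μ) / M ≤ η / 4 := fun k =>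
    (div_le_div_of_nonneg_right (hB k) hM.le).trans hMB
  have hgap_small := (div_lt_iff₀ hδ).2 hp
  calc μ.real {x | ε ≤ dist (v p.1 x) (v p.2 x)} ≤ _ :=
        hle (v p.1) (v p.2) (hv p.1) (hv p.2) (hint p.1 p.2)
    _ < η := by linarith [hlarge p.1, hlarge p.2]

end CauchyInMeasure

section BoundedSequences

variable {X V : Type*} [MeasurableSpace X] {μ : Measure X}

lemma integrable_of_tendsto_ae_of_integral_norm_le [NormedAddCommGroup V] {v : ℕ → X → V}
    {E : X → V} {B : ℝ} (hv : ∀ k, Integrable (v k) μ) (hB : ∀ k, ∫ x, ‖v k x‖ ∂μ ≤ B)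
    (hE : ∀ᵐ x ∂μ, Tendsto (fun k => v k x) atTop (𝓝 (E x))) : Integrable E μ := by
  refine memLp_one_iff_integrable.1
    ⟨aestronglyMeasurable_of_tendsto_ae _ (fun k => (hv k).1) hE, ?_⟩
  calc eLpNorm E 1 μ ≤ liminf (fun k => eLpNorm (v k) 1 μ) atTop :=
        Lp.eLpNorm_lim_le_liminf_eLpNorm (fun k => (hv k).1) E hE
    _ ≤ ENNReal.ofReal B := by
        refine liminf_le_of_frequently_le' (.of_forall fun k => ?_)
        rw [eLpNorm_one_eq_lintegral_enorm, ← ofReal_integral_norm_eq_lintegral_enorm (hv k)]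
        exact ENNReal.ofReal_le_ofReal (hB k)
    _ < ∞ := ENNReal.ofReal_lt_top

lemma exists_monotone_exhaustion_ae_le [IsFiniteMeasure μ] {g : ℕ → X → ℝ}
    (hg : ∀ k, AEMeasurable (g k) μ) (hbdd : ∀ᵐ x ∂μ, BddAbove (range fun k => g k x)) :
    ∃ S : ℕ → Set X, (∀ j, MeasurableSet (S j)) ∧ Monotone S ∧
      Tendsto (fun j => μ (S j)ᶜ) atTop (𝓝 0) ∧
      ∀ j : ℕ, ∀ᵐ x ∂μ, x ∈ S j → ∀ k, g k x ≤ j := by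
  let S : ℕ → Set X := fun j => {x | ∀ k, (hg k).mk (g k) x ≤ j}
  have hmk : ∀ᵐ x ∂μ, ∀ k, g k x = (hg k).mk (g k) x := ae_all_iff.2 fun k => (hg k).ae_eq_mk
  have hS : ∀ j, MeasurableSet (S j) := fun j => by
    simp only [S, ofPred_forall]
    exact .iInter fun k => measurableSet_le (hg k).measurable_mk measurable_const
  have hmono : Monotone S := fun i j hij x hx k => (hx k).trans (Nat.cast_le.2 hij)
  have hinter : μ (⋂ j, (S j)ᶜ) = 0 := by
    rw [← compl_iUnion]
    filter_upwards [hbdd, hmk] with x ⟨C, hC⟩ hx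
    obtain ⟨j, hj⟩ := exists_nat_ge C
    exact mem_iUnion.2 ⟨j, fun k => hx k ▸ (hC ⟨k, rfl⟩).trans hj⟩
  refine ⟨S, hS, hmono, ?_, fun j => hmk.mono fun x hx hxS k => (hx k).trans_le (hxS k)⟩
  rw [← hinter]
  exact tendsto_measure_iInter_atTop (fun j => (hS j).compl.nullMeasurableSet)
    (fun i j hij => compl_subset_compl.2 (hmono hij)) ⟨0, measure_ne_top _ _⟩

end BoundedSequences

section Frobenius

variable {ι κ : Type*} [Fintype ι] [Fintype κ]

/-- The identification of matrices, given as curried tuples, with the Euclidean space `ℝ^(ι × κ)`;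
it turns `mdot` and `mnorm` into the Euclidean inner product and norm. -/
noncomputable def matrixToEuclidean : (ι → κ → ℝ) ≃L[ℝ] EuclideanSpace ℝ (ι × κ) :=
  ((LinearEquiv.curry ℝ ℝ ι κ).symm ≪≫ₗ
    (WithLp.linearEquiv 2 ℝ (ι × κ → ℝ)).symm).toContinuousLinearEquiv

lemma mdot_eq_inner (A B : ι → κ → ℝ) :
    mdot A B = ⟪matrixToEuclidean A, matrixToEuclidean B⟫ := by
  simp [mdot, matrixToEuclidean, PiLp.inner_apply, Fintype.sum_prod_type, mul_comm]

lemma mnorm_eq_norm (A : ι → κ → ℝ) : mnorm A = ‖matrixToEuclidean A‖ := by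
  rw [mnorm, mdot_eq_inner, norm_eq_sqrt_real_inner]

lemma mnorm_nonneg (A : ι → κ → ℝ) : 0 ≤ mnorm A := Real.sqrt_nonneg _

lemma abs_mdot_le (A B : ι → κ → ℝ) : |mdot A B| ≤ mnorm A * mnorm B := by
  simpa only [mdot_eq_inner, mnorm_eq_norm] using abs_real_inner_le_norm _ _

lemma norm_le_mnorm (A : ι → κ → ℝ) : ‖A‖ ≤ mnorm A := by
  refine (pi_norm_le_iff_of_nonneg (mnorm_nonneg A)).2 fun a =>
    (pi_norm_le_iff_of_nonneg (mnorm_nonneg A)).2 fun i => ?_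
  rw [mnorm_eq_norm]
  exact PiLp.norm_apply_le (matrixToEuclidean A) (a, i)

lemma continuous_mnorm : Continuous (mnorm : (ι → κ → ℝ) → ℝ) := by
  simp only [funext mnorm_eq_norm]
  fun_prop

lemma continuous_mdot : Continuous fun p : (ι → κ → ℝ) × (ι → κ → ℝ) => mdot p.1 p.2 := by
  simp only [mdot]
  fun_prop

lemma isLinearMap_mdot (A : ι → κ → ℝ) : IsLinearMap ℝ (mdot A) := by
  constructor <;> intros <;> simp [mdot_eq_inner, inner_add_right, inner_smul_right]

end Frobenius

section RadialConvexity

lemma strictMonoOn_of_strictConvexOn_of_monotoneOn {s : Set ℝ} {f : ℝ → ℝ}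
    (hf : StrictConvexOn ℝ s f) (hmono : MonotoneOn f s) : StrictMonoOn f s := by
  intro x hx y hy hxy
  refine (hmono hx hy hxy.le).lt_of_ne fun heq => ?_
  have hmid : midpoint ℝ x y ∈ s := hf.1.midpoint_mem hx hy
  have hgap : 0 < midpointGap f x y := midpointGap_pos hf hx hy hxy.ne
  have hle : f x ≤ f (midpoint ℝ x y) := hmono hx hmid (left_le_midpoint.2 hxy.le)
  rw [midpointGap, ← heq] at hgap
  linarith

lemma strictConvexOn_comp_norm {V : Type*} [NormedAddCommGroup V] [NormedSpace ℝ V]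
    [StrictConvexSpace ℝ V] {f : ℝ → ℝ} (hf : StrictConvexOn ℝ (Ici 0) f)
    (hmono : MonotoneOn f (Ici 0)) : StrictConvexOn ℝ univ fun z : V => f ‖z‖ := by
  refine ⟨convex_univ, fun z _ w _ hzw a b ha hb hab => ?_⟩
  by_cases hnorm : ‖z‖ = ‖w‖
  · have hlt : ‖a • z + b • w‖ < ‖z‖ := norm_combo_lt_of_ne le_rfl hnorm.ge hzw ha hb hab
    calc f ‖a • z + b • w‖ < f ‖z‖ :=
          strictMonoOn_of_strictConvexOn_of_monotoneOn hf hmono (norm_nonneg _) (norm_nonneg _) hlt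
      _ = a • f ‖z‖ + b • f ‖w‖ := by rw [← hnorm, ← add_smul, hab, one_smul]
  · have htri : ‖a • z + b • w‖ ≤ a • ‖z‖ + b • ‖w‖ := by
      simpa only [norm_smul, Real.norm_of_nonneg ha.le, Real.norm_of_nonneg hb.le, smul_eq_mul]
        using norm_add_le (a • z) (b • w)
    calc f ‖a • z + b • w‖ ≤ f (a • ‖z‖ + b • ‖w‖) :=
          hmono (norm_nonneg _) ((norm_nonneg _).trans htri) htri
      _ < a • f ‖z‖ + b • f ‖w‖ := hf.2 (norm_nonneg _) (norm_nonneg _) hnorm ha hb hab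

lemma strictConvexOn_comp_mnorm {ι κ : Type*} [Fintype ι] [Fintype κ] {f : ℝ → ℝ}
    (hf : StrictConvexOn ℝ (Ici 0) f) (hmono : MonotoneOn f (Ici 0)) :
    StrictConvexOn ℝ univ fun A : ι → κ → ℝ => f (mnorm A) := by
  simp only [mnorm_eq_norm]
  refine ⟨convex_univ, fun A _ B _ hAB a b ha hb hab => ?_⟩
  simp only [map_add, map_smul]
  exact (strictConvexOn_comp_norm hf hmono).2 (mem_univ _) (mem_univ _)
    (matrixToEuclidean.injective.ne hAB) ha hb hab

lemma strictConvexOn_mnorm_sq {ι κ : Type*} [Fintype ι] [Fintype κ] :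
    StrictConvexOn ℝ univ fun A : ι → κ → ℝ => mnorm A ^ 2 :=
  strictConvexOn_comp_mnorm (strictConvexOn_pow le_rfl) fun _ hx _ _ hxy =>
    pow_le_pow_left₀ hx hxy 2

end RadialConvexity

section LinearGrowth

variable {f : ℝ → ℝ} {finf : ℝ}

lemma monotoneOn_Ici_of_convexOn_of_deriv_nonneg {a f' : ℝ} (hf : ConvexOn ℝ (Ici a) f)
    (hderiv : HasDerivWithinAt f f' (Ici a) a) (hf' : 0 ≤ f') : MonotoneOn f (Ici a) := by
  intro x hx y hy hxy
  rcases hxy.eq_or_lt with rfl | hxy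
  · rfl
  have hslope : 0 ≤ slope f x y := by
    rcases (mem_Ici.1 hx).eq_or_lt with rfl | hax
    · exact hf'.trans (hf.le_slope_of_hasDerivWithinAt self_mem_Ici hy hxy hderiv)
    · refine (hf'.trans (hf.le_slope_of_hasDerivWithinAt self_mem_Ici hx hax hderiv)).trans ?_
      simpa only [slope_def_field] using hf.slope_mono_adjacent self_mem_Ici hy hax hxy
  rw [slope_def_field, le_div_iff₀ (sub_pos.2 hxy)] at hslope
  linarith

lemma le_add_mul_of_tendsto_div (hf : ConvexOn ℝ (Ici 0) f)
    (hfinf : Tendsto (fun t => f t / t) atTop (𝓝 finf)) {t : ℝ} (ht : 0 ≤ t) :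
    f t ≤ f 0 + finf * t := by
  rcases ht.eq_or_lt with rfl | ht
  · simp
  have hslope : Tendsto (fun s => (f s - f 0) / s) atTop (𝓝 finf) := by
    simpa only [sub_div, sub_zero, id] using hfinf.sub (tendsto_const_nhds.div_atTop tendsto_id)
  have hle : (f t - f 0) / t ≤ finf := by
    refine ge_of_tendsto hslope ((eventually_ge_atTop t).mono fun s hs => ?_)
    have hs0 : 0 < s := ht.trans_le hs
    simpa only [sub_zero] using
      hf.secant_mono self_mem_Ici ht.le hs0.le ht.ne' hs0.ne' hs
  linarith [(div_le_iff₀ ht).1 hle]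

lemma exists_mul_sub_le_of_tendsto_div (hbdd : BddBelow (f '' Ici 0))
    (hfinf : Tendsto (fun t => f t / t) atTop (𝓝 finf)) {σ : ℝ} (hσ : σ < finf) :
    ∃ C, ∀ t, 0 ≤ t → σ * t - C ≤ f t := by
  obtain ⟨m, hm⟩ := hbdd
  obtain ⟨R, hR⟩ := eventually_atTop.1
    ((hfinf.eventually_const_le hσ).and (eventually_gt_atTop 0))
  refine ⟨max 0 (|σ| * R - m), fun t ht => ?_⟩
  rcases le_total R t with hRt | htR
  · have hlin : σ * t ≤ f t := (le_div_iff₀ (hR t hRt).2).1 (hR t hRt).1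
    linarith [le_max_left 0 (|σ| * R - m)]
  · have hσt : σ * t ≤ |σ| * R := mul_le_mul (le_abs_self σ) htR ht (abs_nonneg σ)
    linarith [le_max_right 0 (|σ| * R - m), hm ⟨t, ht, rfl⟩]

end LinearGrowth

section MatrixFields

variable {X ι κ : Type*} [MeasurableSpace X] {μ : Measure X} [Fintype ι] [Fintype κ]
  {v T : X → ι → κ → ℝ} {f : ℝ → ℝ} {finf τ : ℝ}

lemma integrable_mnorm (hv : Integrable v μ) : Integrable (fun x => mnorm (v x)) μ := by
  simp only [mnorm_eq_norm]
  exact (matrixToEuclidean.toContinuousLinearMap.integrable_comp hv).norm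

lemma integrable_mdot (hT : AEStronglyMeasurable T μ) (hτ : ∀ᵐ x ∂μ, mnorm (T x) ≤ τ)
    (hv : Integrable v μ) : Integrable (fun x => mdot (T x) (v x)) μ := by
  refine ((integrable_mnorm hv).const_mul τ).mono'
    (continuous_mdot.comp_aestronglyMeasurable₂ hT hv.1) ?_
  filter_upwards [hτ] with x hx
  exact (abs_mdot_le _ _).trans (mul_le_mul_of_nonneg_right hx (mnorm_nonneg _))

lemma continuous_comp_mnorm (hf : StrictConvexOn ℝ (Ici 0) f) (hmono : MonotoneOn f (Ici 0)) :
    Continuous fun A : ι → κ → ℝ => f (mnorm A) :=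
  (strictConvexOn_comp_mnorm hf hmono).convexOn.locallyLipschitz.continuous

lemma integrable_comp_mnorm [IsFiniteMeasure μ] (hf : StrictConvexOn ℝ (Ici 0) f)
    (hmono : MonotoneOn f (Ici 0)) (hfinf : Tendsto (fun t => f t / t) atTop (𝓝 finf))
    (hv : Integrable v μ) : Integrable (fun x => f (mnorm (v x))) μ := by
  refine integrable_of_le_of_le (g₁ := fun _ => f 0) (g₂ := fun x => f 0 + finf * mnorm (v x))
    ((continuous_comp_mnorm hf hmono).comp_aestronglyMeasurable hv.1)
    (ae_of_all _ fun x => hmono self_mem_Ici (mnorm_nonneg _) (mnorm_nonneg _))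
    (ae_of_all _ fun x => le_add_mul_of_tendsto_div hf.convexOn hfinf (mnorm_nonneg _))
    (integrable_const _) ((integrable_const _).add ((integrable_mnorm hv).const_mul _))

end MatrixFields

section Energy

variable {n N : ℕ} {Ω : Set (EVec n)} {f : ℝ → ℝ} {T₀ : EVec n → Fin N → Fin n → ℝ} {finf τ : ℝ}
  {v w : EVec n → Fin N → Fin n → ℝ} {𝒲 : Set (EVec n → Fin N → Fin n → ℝ)}

lemma exists_ae_mnorm_le_of_linfNormOn_lt (hT : linfNormOn Ω T₀ < ENNReal.ofReal finf) :
    ∃ τ < finf, ∀ᵐ x ∂volume.restrict Ω, mnorm (T₀ x) ≤ τ := by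
  refine ⟨(linfNormOn Ω T₀).toReal, ENNReal.toReal_lt_of_lt_ofReal hT, ?_⟩
  filter_upwards [ENNReal.ae_le_essSup fun x => ENNReal.ofReal (mnorm (T₀ x))] with x hx
  exact (ENNReal.ofReal_le_iff_le_toReal hT.ne_top).1 hx

/-- The standing assumptions on the functional `FF Ω f T₀`: a domain of finite measure, a strictly
convex nondecreasing profile `f` of linear growth with recession value `finf = f^∞(1)`, and a
measurable datum `T₀` of modulus at most `τ`. -/
structure IsLinearGrowthEnergy (Ω : Set (EVec n)) (f : ℝ → ℝ) (T₀ : EVec n → Fin N → Fin n → ℝ)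
    (finf τ : ℝ) : Prop where
  measure_ne_top : volume Ω ≠ ∞
  strictConvexOn : StrictConvexOn ℝ (Ici 0) f
  monotoneOn : MonotoneOn f (Ici 0)
  tendsto_div : Tendsto (fun t => f t / t) atTop (𝓝 finf)
  aestronglyMeasurable : AEStronglyMeasurable T₀ (volume.restrict Ω)
  ae_mnorm_le : ∀ᵐ x ∂volume.restrict Ω, mnorm (T₀ x) ≤ τ

namespace IsLinearGrowthEnergy

lemma isFiniteMeasure (h : IsLinearGrowthEnergy Ω f T₀ finf τ) :
    IsFiniteMeasure (volume.restrict Ω) :=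
  isFiniteMeasure_restrict.2 h.measure_ne_top

lemma integrableOn_comp_mnorm (h : IsLinearGrowthEnergy Ω f T₀ finf τ) (hv : IntegrableOn v Ω) :
    IntegrableOn (fun x => f (mnorm (v x))) Ω :=
  have := h.isFiniteMeasure
  integrable_comp_mnorm h.strictConvexOn h.monotoneOn h.tendsto_div hv

lemma integrableOn_density (h : IsLinearGrowthEnergy Ω f T₀ finf τ) (hv : IntegrableOn v Ω) :
    IntegrableOn (fun x => f (mnorm (v x)) - mdot (T₀ x) (v x)) Ω :=
  (h.integrableOn_comp_mnorm hv).sub (integrable_mdot h.aestronglyMeasurable h.ae_mnorm_le hv)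

lemma convexOn_FF (h : IsLinearGrowthEnergy Ω f T₀ finf τ) (h𝒲 : Convex ℝ 𝒲)
    (hint : ∀ v ∈ 𝒲, IntegrableOn v Ω) : ConvexOn ℝ 𝒲 (FF Ω f T₀) :=
  convexOn_integral_comp (h := fun x z => f (mnorm z) - mdot (T₀ x) z)
    (fun x => (strictConvexOn_comp_mnorm h.strictConvexOn h.monotoneOn).convexOn.sub
      (((isLinearMap_mdot (T₀ x)).mk' _).concaveOn convex_univ))
    h𝒲 fun v hv => h.integrableOn_density (hint v hv)

lemma midpointGap_FF (h : IsLinearGrowthEnergy Ω f T₀ finf τ) (hv : IntegrableOn v Ω)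
    (hw : IntegrableOn w Ω) :
    midpointGap (FF Ω f T₀) v w =
      ∫ x in Ω, midpointGap (fun z => f (mnorm z)) (v x) (w x) := by
  calc midpointGap (FF Ω f T₀) v w
      = ∫ x in Ω, midpointGap (fun z => f (mnorm z) - mdot (T₀ x) z) (v x) (w x) :=
        midpointGap_integral_comp (h := fun x z => f (mnorm z) - mdot (T₀ x) z)
          (h.integrableOn_density hv) (h.integrableOn_density hw)
          (h.integrableOn_density (integrable_midpoint hv hw))
    _ = _ := integral_congr_ae <| ae_of_all _ fun x =>
        midpointGap_sub_linear _ ((isLinearMap_mdot (T₀ x)).mk' _) (v x) (w x)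

lemma integrableOn_midpointGap (h : IsLinearGrowthEnergy Ω f T₀ finf τ) (hv : IntegrableOn v Ω)
    (hw : IntegrableOn w Ω) :
    IntegrableOn (fun x => midpointGap (fun z => f (mnorm z)) (v x) (w x)) Ω :=
  (((h.integrableOn_comp_mnorm hv).add (h.integrableOn_comp_mnorm hw)).div_const 2).sub
    (h.integrableOn_comp_mnorm (integrable_midpoint hv hw))

lemma exists_pos_mul_mnorm_le_density (h : IsLinearGrowthEnergy Ω f T₀ finf τ) (hτ : τ < finf) :
    ∃ c > 0, ∃ C, ∀ᵐ x ∂volume.restrict Ω, ∀ z : Fin N → Fin n → ℝ,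
      c * mnorm z - C ≤ f (mnorm z) - mdot (T₀ x) z := by
  obtain ⟨σ, hτσ, hσ⟩ := exists_between hτ
  have hbdd : BddBelow (f '' Ici 0) :=
    ⟨f 0, forall_mem_image.2 fun t ht => h.monotoneOn self_mem_Ici ht ht⟩
  obtain ⟨C, hC⟩ := exists_mul_sub_le_of_tendsto_div hbdd h.tendsto_div hσ
  refine ⟨σ - τ, sub_pos.2 hτσ, C, h.ae_mnorm_le.mono fun x hx z => ?_⟩
  have hdot : mdot (T₀ x) z ≤ τ * mnorm z := (le_abs_self _).trans
    ((abs_mdot_le _ _).trans (mul_le_mul_of_nonneg_right hx (mnorm_nonneg z)))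
  linarith [hC _ (mnorm_nonneg z)]

lemma exists_pos_mul_integral_norm_le_FF (h : IsLinearGrowthEnergy Ω f T₀ finf τ)
    (hτ : τ < finf) :
    ∃ c > 0, ∃ C, ∀ v : EVec n → Fin N → Fin n → ℝ, IntegrableOn v Ω →
      c * ∫ x in Ω, ‖v x‖ ≤ FF Ω f T₀ v + C := by
  have := h.isFiniteMeasure
  obtain ⟨c, hc, C, hdensity⟩ := h.exists_pos_mul_mnorm_le_density hτ
  refine ⟨c, hc, volume.real Ω * C, fun v hv => ?_⟩
  have hlin : IntegrableOn (fun x => c * ‖v x‖) Ω := hv.norm.const_mul c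
  have hconst : IntegrableOn (fun _ => C) Ω := integrable_const C
  have hle : ∫ x in Ω, (c * ‖v x‖ - C) ≤ FF Ω f T₀ v := by
    refine integral_mono_ae (hlin.sub hconst) (h.integrableOn_density hv) ?_
    filter_upwards [hdensity] with x hx
    exact (sub_le_sub_right (mul_le_mul_of_nonneg_left (norm_le_mnorm _) hc.le) C).trans (hx (v x))
  rw [integral_sub hlin hconst, integral_const_mul, setIntegral_const, smul_eq_mul] at hle
  exact sub_le_iff_le_add.1 hle

section Minimizers

variable {ε : ℕ → ℝ} {v : ℕ → EVec n → Fin N → Fin n → ℝ}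

lemma exists_integral_norm_le_of_isMinOn (h : IsLinearGrowthEnergy Ω f T₀ finf τ) (hτ : τ < finf)
    (hint : ∀ w ∈ 𝒲, IntegrableOn w Ω) (hε : Antitone ε) (hε0 : ∀ k, 0 ≤ ε k)
    (hv : ∀ k, v k ∈ 𝒲)
    (hmin : ∀ k, IsMinOn (fun w => FF Ω f T₀ w + ε k * ∫ x in Ω, mnorm (w x) ^ 2) 𝒲 (v k)) :
    ∃ B, ∀ k, ∫ x in Ω, ‖v k x‖ ≤ B := by
  obtain ⟨c, hc, C, hcoercive⟩ := h.exists_pos_mul_integral_norm_le_FF hτ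
  exact exists_forall_le_of_isMinOn_regularized
    (p := fun w : EVec n → Fin N → Fin n → ℝ => ∫ x in Ω, ‖w x‖) hc
    (fun w hw => hcoercive w (hint w hw)) hε hε0
    (fun w _ => integral_nonneg fun x => sq_nonneg _) hv hmin

lemma tendsto_integral_midpointGap_of_isMinOn (h : IsLinearGrowthEnergy Ω f T₀ finf τ)
    (hτ : τ < finf) (h𝒲 : Convex ℝ 𝒲) (hint : ∀ w ∈ 𝒲, IntegrableOn w Ω)
    (hint_sq : ∀ w ∈ 𝒲, IntegrableOn (fun x => mnorm (w x) ^ 2) Ω)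
    (hε : Antitone ε) (hε0 : ∀ k, 0 ≤ ε k) (hv : ∀ k, v k ∈ 𝒲)
    (hmin : ∀ k, IsMinOn (fun w => FF Ω f T₀ w + ε k * ∫ x in Ω, mnorm (w x) ^ 2) 𝒲 (v k)) :
    Tendsto (fun p : ℕ × ℕ => ∫ x in Ω, midpointGap (fun z => f (mnorm z)) (v p.1 x) (v p.2 x))
      atTop (𝓝 0) := by
  obtain ⟨c, hc, C, hcoercive⟩ := h.exists_pos_mul_integral_norm_le_FF hτ
  have hbdd : BddBelow (FF Ω f T₀ '' 𝒲) := by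
    refine ⟨-C, forall_mem_image.2 fun w hw => neg_le_iff_add_nonneg.2 ?_⟩
    exact (mul_nonneg hc.le (integral_nonneg fun x => norm_nonneg _)).trans
      (hcoercive w (hint w hw))
  have hsq_conv : ConvexOn ℝ 𝒲 fun w => ∫ x in Ω, mnorm (w x) ^ 2 :=
    convexOn_integral_comp (fun _ => strictConvexOn_mnorm_sq.convexOn) h𝒲 hint_sq
  have hgap := tendsto_midpointGap_of_isMinOn_regularized (h.convexOn_FF h𝒲 hint) hbdd
    (fun w _ => integral_nonneg fun x => sq_nonneg _) hsq_conv hε hε0 hv hmin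
  exact hgap.congr fun p => h.midpointGap_FF (hint _ (hv p.1)) (hint _ (hv p.2))

lemma cauchyInMeasure_of_isMinOn (h : IsLinearGrowthEnergy Ω f T₀ finf τ)
    (hτ : τ < finf) (h𝒲 : Convex ℝ 𝒲) (hint : ∀ w ∈ 𝒲, IntegrableOn w Ω)
    (hint_sq : ∀ w ∈ 𝒲, IntegrableOn (fun x => mnorm (w x) ^ 2) Ω)
    (hε : Antitone ε) (hε0 : ∀ k, 0 ≤ ε k) (hv : ∀ k, v k ∈ 𝒲)
    (hmin : ∀ k, IsMinOn (fun w => FF Ω f T₀ w + ε k * ∫ x in Ω, mnorm (w x) ^ 2) 𝒲 (v k)) :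
    CauchyInMeasure (volume.restrict Ω) v := by
  have := h.isFiniteMeasure
  have hvint : ∀ k, IntegrableOn (v k) Ω := fun k => hint _ (hv k)
  obtain ⟨B, hB⟩ := h.exists_integral_norm_le_of_isMinOn hτ hint hε hε0 hv hmin
  exact cauchyInMeasure_of_tendsto_integral_midpointGap
    (strictConvexOn_comp_mnorm h.strictConvexOn h.monotoneOn)
    (continuous_comp_mnorm h.strictConvexOn h.monotoneOn) hvint hB
    (fun k l => h.integrableOn_midpointGap (hvint k) (hvint l))
    (h.tendsto_integral_midpointGap_of_isMinOn hτ h𝒲 hint hint_sq hε hε0 hv hmin)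

end Minimizers

end IsLinearGrowthEnergy

end Energy

section SobolevClass

lemma memLp_two_iff_integrable_norm_comp_sq {X V W : Type*} [MeasurableSpace X] {μ : Measure X}
    [NormedAddCommGroup V] [NormedSpace ℝ V] [NormedAddCommGroup W] [NormedSpace ℝ W]
    (e : V ≃L[ℝ] W) {v : X → V} (hv : AEStronglyMeasurable v μ) :
    MemLp v 2 μ ↔ Integrable (fun x => ‖e (v x)‖ ^ 2) μ := by
  have hcomp : MemLp (e ∘ v) 2 μ ↔ MemLp v 2 μ :=
    e.lipschitz.memLp_comp_iff_of_antilipschitz e.antilipschitz (map_zero e)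
  rw [← hcomp]
  exact memLp_two_iff_integrable_sq_norm (e.continuous.comp_aestronglyMeasurable hv)

lemma integrable_mul_of_hasCompactSupport {X : Type*} [TopologicalSpace X] [MeasurableSpace X]
    [OpensMeasurableSpace X] {μ : Measure X} {g ψ : X → ℝ} (hg : Integrable g μ)
    (hψ : Continuous ψ) (hsupp : HasCompactSupport ψ) : Integrable (fun x => g x * ψ x) μ := by
  obtain ⟨C, hC⟩ := hsupp.exists_bound_of_continuous hψ
  exact hg.mul_bdd hψ.aestronglyMeasurable (ae_of_all _ hC)

lemma vnorm_eq_norm {ι : Type*} [Fintype ι] (v : ι → ℝ) :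
    vnorm v = ‖(EuclideanSpace.equiv ι ℝ).symm v‖ := by
  simp [vnorm, EuclideanSpace.norm_eq]

lemma memLp_two_iff_integrable_mnorm_sq {X ι κ : Type*} [MeasurableSpace X] {μ : Measure X}
    [Fintype ι] [Fintype κ] {v : X → ι → κ → ℝ} (hv : AEStronglyMeasurable v μ) :
    MemLp v 2 μ ↔ Integrable (fun x => mnorm (v x) ^ 2) μ := by
  simp only [mnorm_eq_norm]
  exact memLp_two_iff_integrable_norm_comp_sq (matrixToEuclidean (ι := ι) (κ := κ)) hv

lemma memLp_two_iff_integrable_vnorm_sq {X ι : Type*} [MeasurableSpace X] {μ : Measure X}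
    [Fintype ι] {v : X → ι → ℝ} (hv : AEStronglyMeasurable v μ) :
    MemLp v 2 μ ↔ Integrable (fun x => vnorm (v x) ^ 2) μ := by
  simp only [vnorm_eq_norm]
  exact memLp_two_iff_integrable_norm_comp_sq (EuclideanSpace.equiv ι ℝ).symm hv

variable {n : ℕ} {ι : Type*} [Fintype ι] {Ω : Set (EVec n)} {u v : EVec n → ι → ℝ}
  {Du Dv : EVec n → ι → Fin n → ℝ}

lemma memW12_iff_memLp : MemW12 Ω u Du ↔
    HasWeakDerivOn Ω u Du ∧ MemLp u 2 (volume.restrict Ω) ∧ MemLp Du 2 (volume.restrict Ω) := by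
  refine and_congr_right fun h => and_congr ?_ ?_
  · exact (memLp_two_iff_integrable_vnorm_sq h.1.aestronglyMeasurable).symm
  · exact (memLp_two_iff_integrable_mnorm_sq h.2.1.aestronglyMeasurable).symm

lemma HasWeakDerivOn.add (hu : HasWeakDerivOn Ω u Du) (hv : HasWeakDerivOn Ω v Dv) :
    HasWeakDerivOn Ω (u + v) (Du + Dv) := by
  refine ⟨hu.1.add hv.1, hu.2.1.add hv.2.1, fun φ hφ hsupp hsub a i => ?_⟩
  have hφ' : Continuous fun x => fderiv ℝ φ x (EuclideanSpace.single i 1) :=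
    (hφ.continuous_fderiv one_ne_zero).clm_apply continuous_const
  have hleft : ∀ w : EVec n → ι → ℝ, IntegrableOn w Ω →
      IntegrableOn (fun x => w x a * fderiv ℝ φ x (EuclideanSpace.single i 1)) Ω := fun w hw =>
    integrable_mul_of_hasCompactSupport (hw.eval a) hφ' (hsupp.fderiv_apply ℝ _)
  have hright : ∀ Dw : EVec n → ι → Fin n → ℝ, IntegrableOn Dw Ω →
      IntegrableOn (fun x => Dw x a i * φ x) Ω := fun Dw hDw =>
    integrable_mul_of_hasCompactSupport ((hDw.eval a).eval i) hφ.continuous hsupp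
  simp only [Pi.add_apply, add_mul]
  rw [integral_add (hleft u hu.1) (hleft v hv.1),
    integral_add (hright Du hu.2.1) (hright Dv hv.2.1),
    hu.2.2 φ hφ hsupp hsub a i, hv.2.2 φ hφ hsupp hsub a i, neg_add]

lemma HasWeakDerivOn.const_smul (hu : HasWeakDerivOn Ω u Du) (c : ℝ) :
    HasWeakDerivOn Ω (c • u) (c • Du) := by
  refine ⟨hu.1.smul c, hu.2.1.smul c, fun φ hφ hsupp hsub a i => ?_⟩
  simp only [Pi.smul_apply, smul_eq_mul, mul_assoc, integral_const_mul]
  rw [hu.2.2 φ hφ hsupp hsub a i, mul_neg]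

lemma convex_setOf_memW12_gradient : Convex ℝ {Dw | ∃ w : EVec n → ι → ℝ, MemW12 Ω w Dw} := by
  rintro Dv ⟨v, hv⟩ Dw ⟨w, hw⟩ a b - - -
  rw [memW12_iff_memLp] at hv hw
  exact ⟨a • v + b • w, memW12_iff_memLp.2 ⟨(hv.1.const_smul a).add (hw.1.const_smul b),
    (hv.2.1.const_smul a).add (hw.2.1.const_smul b),
    (hv.2.2.const_smul a).add (hw.2.2.const_smul b)⟩⟩

lemma MemW2inf.aestronglyMeasurable {N : ℕ} {T : EVec n → Fin N → Fin n → ℝ} (hT : MemW2inf Ω T)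
    (hΩ : MeasurableSet Ω) : AEStronglyMeasurable T (volume.restrict Ω) := by
  obtain ⟨_, _, -, hderiv, -⟩ := hT
  exact ContinuousOn.aestronglyMeasurable (fun x hx => (hderiv x hx).continuousWithinAt) hΩ

end SobolevClass

lemma bitingConvTo_of_tendsto_ae {n N : ℕ} {Ω : Set (EVec n)} (hΩ : MeasurableSet Ω)
    (hΩfin : volume Ω ≠ ∞) {v : ℕ → EVec n → Fin N → Fin n → ℝ}
    {E : EVec n → Fin N → Fin n → ℝ} (hv : ∀ k, AEStronglyMeasurable (v k) (volume.restrict Ω))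
    (hE : ∀ᵐ x ∂volume.restrict Ω, Tendsto (fun k => v k x) atTop (𝓝 (E x))) :
    BitingConvTo Ω v E := by
  have : IsFiniteMeasure (volume.restrict Ω) := isFiniteMeasure_restrict.2 hΩfin
  have hbdd : ∀ᵐ x ∂volume.restrict Ω, BddAbove (range fun k => mnorm (v k x)) :=
    hE.mono fun x hx => ((continuous_mnorm.tendsto _).comp hx).bddAbove_range
  obtain ⟨S, hS, hmono, hlim, hle⟩ := exists_monotone_exhaustion_ae_le
    (fun k => (continuous_mnorm.comp_aestronglyMeasurable (hv k)).aemeasurable) hbdd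
  refine ⟨fun j => Ω ∩ S j, fun j => ⟨hΩ.inter (hS j), inter_subset_left⟩,
    fun i j hij => inter_subset_inter_right Ω (hmono hij), ?_, fun j g hg => ?_⟩
  · simp_rw [sdiff_self_inter, sdiff_eq_compl_inter, ← Measure.restrict_apply (hS _).compl]
    exact hlim
  rintro ⟨C, hC⟩
  have hfin : volume (Ω ∩ S j) ≠ ∞ := measure_ne_top_of_subset inter_subset_left hΩfin
  have hmem : ∀ᵐ x ∂volume.restrict (Ω ∩ S j), x ∈ Ω ∩ S j :=
    ae_restrict_mem (hΩ.inter (hS j))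
  refine tendsto_integral_of_dominated_convergence (fun _ => j * C)
    (fun k => continuous_mdot.comp_aestronglyMeasurable₂ ((hv k).mono_set inter_subset_left) hg)
    (integrableOn_const hfin) (fun k => ?_) ?_
  · filter_upwards [hmem, ae_restrict_of_ae_restrict_of_subset inter_subset_left (hle j)]
      with x hx hxle
    exact (abs_mdot_le _ _).trans
      (mul_le_mul (hxle hx.2 k) (hC x) (mnorm_nonneg _) j.cast_nonneg)
  · filter_upwards [ae_restrict_of_ae_restrict_of_subset inter_subset_left hE] with x hx
    have hcont : Continuous fun A : Fin N → Fin n → ℝ => mdot A (g x) :=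
      continuous_mdot.comp (.prodMk_left (g x))
    exact (hcont.tendsto (E x)).comp hx

theorem gradients_biting_and_pointwise_convergence_general
    {n N : ℕ} {Ω : Set (EVec n)} (hΩ : MeasurableSet Ω) (hΩfin : volume Ω ≠ ∞) {f : ℝ → ℝ}
    (hf : StrictConvexOn ℝ (Ici 0) f) (hmono : MonotoneOn f (Ici 0)) {finf : ℝ}
    (hfinf : Tendsto (fun t => f t / t) atTop (𝓝 finf)) {T₀ : EVec n → Fin N → Fin n → ℝ}
    (hT : AEStronglyMeasurable T₀ (volume.restrict Ω))
    (hTsmall : linfNormOn Ω T₀ < ENNReal.ofReal finf)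
    {𝒲 : Set (EVec n → Fin N → Fin n → ℝ)} (h𝒲 : Convex ℝ 𝒲)
    (hL2 : ∀ w ∈ 𝒲, MemLp w 2 (volume.restrict Ω))
    {v : ℕ → EVec n → Fin N → Fin n → ℝ} (hv : ∀ k, 0 < k → v k ∈ 𝒲)
    (hmin : ∀ k, 0 < k → IsMinOn (FFk Ω f T₀ k) 𝒲 (v k)) :
    ∃ (E : EVec n → Fin N → Fin n → ℝ) (φ : ℕ → ℕ), IntegrableOn E Ω ∧ StrictMono φ ∧
      BitingConvTo Ω (fun l => v (φ l)) E ∧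
      ∀ᵐ x ∂volume.restrict Ω, Tendsto (fun l => v (φ l) x) atTop (𝓝 (E x)) := by
  have := isFiniteMeasure_restrict.2 hΩfin
  have hint : ∀ w ∈ 𝒲, IntegrableOn w Ω := fun w hw => (hL2 w hw).integrable one_le_two
  have hint_sq : ∀ w ∈ 𝒲, IntegrableOn (fun x => mnorm (w x) ^ 2) Ω := fun w hw =>
    (memLp_two_iff_integrable_mnorm_sq (hL2 w hw).1).1 (hL2 w hw)
  obtain ⟨τ, hτf, hτ⟩ := exists_ae_mnorm_le_of_linfNormOn_lt hTsmall
  have henergy : IsLinearGrowthEnergy Ω f T₀ finf τ := ⟨hΩfin, hf, hmono, hfinf, hT, hτ⟩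
  have hε : Antitone fun k : ℕ => (2 * ((k + 1 : ℕ) : ℝ))⁻¹ := fun k l hkl => by
    dsimp only
    gcongr
  have hε0 : ∀ k : ℕ, 0 ≤ (2 * ((k + 1 : ℕ) : ℝ))⁻¹ := fun k => by positivity
  have hv' : ∀ k, v (k + 1) ∈ 𝒲 := fun k => hv _ k.succ_pos
  have hmin' := fun k : ℕ => hmin _ k.succ_pos
  obtain ⟨B, hB⟩ := henergy.exists_integral_norm_le_of_isMinOn hτf hint hε hε0 hv' hmin'
  obtain ⟨φ, hφ, E, hE⟩ := (henergy.cauchyInMeasure_of_isMinOn hτf h𝒲 hint hint_sq hε hε0 hv'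
    hmin').exists_subseq_ae_tendsto
  have hvint : ∀ l, IntegrableOn (v (φ l + 1)) Ω := fun l => hint _ (hv' _)
  exact ⟨E, fun l => φ l + 1,
    integrable_of_tendsto_ae_of_integral_norm_le hvint (fun l => hB (φ l)) hE,
    hφ.add_const 1, bitingConvTo_of_tendsto_ae hΩ hΩfin (fun l => (hvint l).1) hE, hE⟩

/-- **Corollary 3.5 (pointwise convergence of the gradients).** Along a subsequence,
the gradients `∇u_k` of the minimisers of the regularised functionals converge in the
biting sense weakly in `L¹` and `ℒⁿ`-a.e. in `Ω` to some `E ∈ L¹(Ω;ℝ^{N×n})`. -/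
theorem gradients_biting_and_pointwise_convergence
    {n N : ℕ} (Ω : Set (EVec n))
    (hΩ : IsLipschitzDomain Ω) (hΩbdd : Bornology.IsBounded Ω)
    (ν L : ℝ) (hν : 0 < ν) (hνL : ν ≤ L)
    (f f' f'' : ℝ → ℝ)
    (hderiv : ∀ t ∈ Set.Ici (0:ℝ), HasDerivWithinAt f (f' t) (Set.Ici 0) t)
    (hderiv' : ∀ t ∈ Set.Ici (0:ℝ), HasDerivWithinAt f' (f'' t) (Set.Ici 0) t)
    (hf''cont : ContinuousOn f'' (Set.Ici 0))
    (hstrict : StrictConvexOn ℝ (Set.Ici 0) f)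
    (hf0 : f 0 = 0) (hf'0 : f' 0 = 0)
    (hgrowth : ∀ t ∈ Set.Ici (0:ℝ), ν * t - L ≤ f t ∧ f t ≤ L * (t + 1))
    (hsec : ∀ t ∈ Set.Ici (0:ℝ), f'' t ≤ L * (1 + t)⁻¹)
    (finf : ℝ) (hfinf : Filter.Tendsto (fun t => f t / t) Filter.atTop (nhds finf))
    (T₀ : EVec n → Fin N → Fin n → ℝ)
    (hT : MemW2inf Ω T₀)
    (hTsmall : linfNormOn Ω T₀ < ENNReal.ofReal finf)
    (u : ℕ → EVec n → Fin N → ℝ) (Du : ℕ → EVec n → Fin N → Fin n → ℝ)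
    (hmem : ∀ k, 0 < k → MemW12 Ω (u k) (Du k))
    (hzero : ∀ k, 0 < k → ZeroMean Ω (u k))
    (hmin : ∀ k, 0 < k →
      ∀ (w : EVec n → Fin N → ℝ) (Dw : EVec n → Fin N → Fin n → ℝ),
        MemW12 Ω w Dw → FFk Ω f T₀ k (Du k) ≤ FFk Ω f T₀ k Dw) :
    ∃ (E : EVec n → Fin N → Fin n → ℝ) (φ : ℕ → ℕ),
      IntegrableOn E Ω volume ∧ StrictMono φ ∧
      BitingConvTo Ω (fun l => Du (φ l)) E ∧
      ∀ᵐ x ∂(volume.restrict Ω),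
        Filter.Tendsto (fun l => Du (φ l) x) Filter.atTop (nhds (E x)) := by
  exact gradients_biting_and_pointwise_convergence_general hΩ.1.measurableSet
    hΩbdd.measure_lt_top.ne hstrict
    (monotoneOn_Ici_of_convexOn_of_deriv_nonneg hstrict.convexOn (hderiv 0 self_mem_Ici) hf'0.ge)
    hfinf (hT.aestronglyMeasurable hΩ.1.measurableSet) hTsmall convex_setOf_memW12_gradient
    (fun _ ⟨_, hw⟩ => (memW12_iff_memLp.1 hw).2.2) (fun k hk => ⟨u k, hmem k hk⟩)
    fun k hk _ ⟨w, hw⟩ => hmin k hk w _ hw
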